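/- arXiv:0805.3754 — 5 statements merged into one kernel-verified Lean document; each statement's English description precedes it below -/
import Mathlib

section
/- For every r = 1, …, ℓ+1 and every p ∈ ℤ^{ℓ+1}, the q-deformed gl_{ℓ+1}-Whittaker function Ψ_z (extended by zero outside the dominant domain) satisfies the eigenvalue equation (𝓗_r Ψ_z)(p) = e_r(z) · Ψ_z(p), where e_r(z) = Σ_{I ⊆ {1,…,ℓ+1}, |I| = r} ∏_{i∈I} z_i is the r-th elementary symmetric polynomial in z_1,…,z_{ℓ+1}. -/
open Finset

/-- The `q`-factorial `(n)_q! = ∏_{m=1}^{n} (1 - q^m)` (equal to `1` for `n ≤ 0`). -/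
noncomputable def qfac {K : Type*} [Field K] (q : K) (n : ℤ) : K :=
  ∏ m ∈ Finset.range n.toNat, (1 - q ^ (m + 1))

/-- A Gelfand–Zetlin pattern: a triangular array `g k i = p_{k+1,i+1}` (0-indexed),
satisfying the interlacing conditions `p_{k+1,i} ≥ p_{k,i} ≥ p_{k+1,i+1}`. -/
def IsGZ {n : ℕ} (g : ∀ k : Fin (n + 1), Fin ((k : ℕ) + 1) → ℤ) : Prop :=
  ∀ (k : Fin n) (i : Fin ((k : ℕ) + 1)),
    g k.castSucc i ≤ g k.succ i.castSucc ∧ g k.succ i.succ ≤ g k.castSucc i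

/-- The weight of a Gelfand–Zetlin pattern in the explicit formula for the
`q`-deformed `gl_{n+1}`-Whittaker function. -/
noncomputable def gzWeight {K : Type*} [Field K] (q : K) {n : ℕ} (z : Fin (n + 1) → K)
    (g : ∀ k : Fin (n + 1), Fin ((k : ℕ) + 1) → ℤ) : K :=
  z ⟨0, n.succ_pos⟩ ^ g ⟨0, n.succ_pos⟩ ⟨0, Nat.one_pos⟩ *
  (∏ k : Fin n, z k.succ ^ ((∑ i, g k.succ i) - ∑ i, g k.castSucc i)) *
  (∏ k : Fin n, ∏ i : Fin (k : ℕ), qfac q (g k.castSucc i.castSucc - g k.castSucc i.succ)) *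
  (∏ k : Fin n, ∏ i : Fin ((k : ℕ) + 1),
      (qfac q (g k.succ i.castSucc - g k.castSucc i) *
       qfac q (g k.castSucc i - g k.succ i.succ)))⁻¹

/-- The `q`-deformed `gl_{n+1}`-Whittaker function `Ψ_z(p)`: the sum over all
Gelfand–Zetlin patterns with top row `p` of their weights, if `p` is dominant,
and `0` otherwise. -/
noncomputable def whit {K : Type*} [Field K] (q : K) (n : ℕ) (z : Fin (n + 1) → K)
    (p : Fin (n + 1) → ℤ) : K := by
  classical
  exact if (∀ k : Fin n, p k.succ ≤ p k.castSucc) then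
    ∑ g ∈ (Finset.Icc (fun (k : Fin (n + 1)) (_ : Fin ((k : ℕ) + 1)) => p (Fin.last n))
        (fun (k : Fin (n + 1)) (_ : Fin ((k : ℕ) + 1)) => p ⟨0, n.succ_pos⟩)).filter
        (fun g => IsGZ g ∧ g (Fin.last n) = p),
      gzWeight q z g
  else 0

/-- The normalized `q`-deformed Whittaker function
`Ψ̃_z(p) = (∏_{i=1}^{n} (p_i - p_{i+1})_q!) ⬝ Ψ_z(p)`. -/
noncomputable def nwhit {K : Type*} [Field K] (q : K) (n : ℕ) (z : Fin (n + 1) → K)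
    (p : Fin (n + 1) → ℤ) : K :=
  (∏ i : Fin n, qfac q (p i.castSucc - p i.succ)) * whit q n z p

namespace QW

/-- Indicator shift. -/
def e (b : Bool) : ℤ := if b then 1 else 0

/-- Reciprocal `q`-factorial, zero at negative integers. -/
noncomputable def fi {K : Type*} [Field K] (q : K) (n : ℤ) : K :=
  if n < 0 then 0 else (qfac q n)⁻¹

lemma qfac_succ {K : Type*} [Field K] (q : K) (n : ℤ) (hn : 0 ≤ n) :
    qfac q (n + 1) = (1 - q ^ (n + 1)) * qfac q n := by
  obtain ⟨m, rfl⟩ := Int.eq_ofNat_of_zero_le hn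
  unfold qfac
  have h1 : ((m : ℤ) + 1).toNat = m + 1 := by omega
  rw [h1, Finset.prod_range_succ, Int.toNat_natCast, mul_comm]
  congr 2
  exact_mod_cast (zpow_natCast q (m+1)).symm

lemma one_sub_ne {K : Type*} [Field K] (q : K) (hq : ∀ n : ℕ, 1 ≤ n → q ^ n ≠ 1)
    (n : ℤ) (hn : 0 ≤ n) : (1 - q ^ (n + 1)) ≠ 0 := by
  obtain ⟨m, rfl⟩ := Int.eq_ofNat_of_zero_le hn
  have : q ^ ((m : ℤ) + 1) = q ^ (m + 1) := by exact_mod_cast (zpow_natCast q (m+1))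
  rw [this]
  intro h
  exact hq (m + 1) (by omega) (sub_eq_zero.mp h).symm

lemma fi_pred {K : Type*} [Field K] (q : K) (hq : ∀ n : ℕ, 1 ≤ n → q ^ n ≠ 1) (n : ℤ) :
    fi q (n - 1) = (1 - q ^ n) * fi q n := by
  unfold fi
  rcases lt_trichotomy n 0 with h | h | h
  · rw [if_pos h, if_pos (by omega)]; simp
  · subst h; simp
  · rw [if_neg (by omega), if_neg (by omega)]
    obtain ⟨m, rfl⟩ : ∃ m, n = m + 1 := ⟨n - 1, by ring⟩
    rw [qfac_succ q m (by omega), add_sub_cancel_right, mul_inv,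
      mul_inv_cancel_left₀ (one_sub_ne q hq m (by omega))]

/-- Transfer matrix iteration. -/
def V {K : Type*} [CommRing K] (w : Bool → K) (M : ℕ → Bool → Bool → K) : ℕ → Bool → K
  | 0, b => w b
  | n + 1, b => V w M n true * M n true b + V w M n false * M n false b

lemma sum_snoc {K : Type*} [CommRing K] (n : ℕ) (F : (Fin (n + 1) → Bool) → K) :
    ∑ s, F s = ∑ s : Fin n → Bool, ∑ b, F (Fin.snoc (α := fun _ => Bool) s b) := by
  rw [← Fintype.sum_prod_type' (f := fun s b => F (Fin.snoc (α := fun _ => Bool) s b)),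
    ← (Fin.snocEquiv (fun _ : Fin (n + 1) => Bool)).sum_comp,
    ← (Equiv.prodComm _ _).sum_comp]
  rfl

lemma transfer {K : Type*} [CommRing K] (w : Bool → K) (M : ℕ → Bool → Bool → K) (n : ℕ) :
    ∀ h : Bool → K, ∑ s : Fin (n + 1) → Bool,
      w (s 0) * (∏ i : Fin n, M i (s i.castSucc) (s i.succ)) * h (s (Fin.last n))
      = V w M n true * h true + V w M n false * h false := by
  induction n with
  | zero =>
    intro h
    rw [sum_snoc]
    simp [V]
    simp [Fin.snoc]
  | succ n ih =>
    intro h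
    rw [sum_snoc]
    have h0 (s : Fin (n + 1) → Bool) (b : Bool) :
        (Fin.snoc (α := fun _ => Bool) s b) 0 = s 0 :=
      Fin.snoc_castSucc (α := fun _ => Bool) _ _ (0 : Fin (n + 1))
    have h1 (s : Fin (n + 1) → Bool) (b : Bool) (i : Fin n) :
        (Fin.snoc (α := fun _ => Bool) s b) i.castSucc.succ = s i.succ :=
      Fin.snoc_castSucc (α := fun _ => Bool) _ _ i.succ
    have h2 (s : Fin (n + 1) → Bool) (b : Bool) :
        (Fin.snoc (α := fun _ => Bool) s b) (Fin.last n).succ = b :=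
      Fin.snoc_last (α := fun _ => Bool) _ _
    simp only [Fin.prod_univ_castSucc, h0, h1, h2, Fin.snoc_castSucc, Fin.snoc_last,
      Fintype.sum_bool, Fin.val_castSucc, Fin.val_last]
    have := ih (fun c => M n c true * h true + M n c false * h false)
    simp only [V]
    rw [← sub_eq_zero] at this ⊢
    rw [← this]
    have e1 : ∀ a b c d : K, a = c → b = d → a - b = c - d := by
      intro a b c d h h'; rw [h, h']
    apply e1
    · apply Finset.sum_congr rfl
      intro s _
      ring
    · ring

/-- weights -/
def tw {K : Type*} [CommRing K] (T : K) (b : Bool) : K := if b then T else 1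
def xw {K : Type*} [CommRing K] (x : K) (c b : Bool) : K := if c && !b then 1 - x else 1

def ML {K : Type*} [CommRing K] (T : K) (u y : ℕ → K) (i : ℕ) (c b : Bool) : K :=
  xw (u i * y i) c b * (if c then 1 else 1 - u i) * (if b then 1 - y i else 1) * tw T b
def wR {K : Type*} [CommRing K] (T : K) (u y : ℕ → K) (i : ℕ) (b : Bool) : K :=
  tw T b * (if b then 1 - y i else 1 - u i)
def MR {K : Type*} [CommRing K] (T : K) (u y : ℕ → K) (i : ℕ) (c b : Bool) : K :=
  xw (y i * u (i + 1)) b c * wR T u y (i + 1) b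

lemma V_rel {K : Type*} [CommRing K] (T : K) (u y : ℕ → K) (n : ℕ) :
    V (tw T) (ML T u y) (n + 1) true = T * V (wR T u y 0) (MR T u y) n true
      + T * (1 - y n) * V (wR T u y 0) (MR T u y) n false ∧
    V (tw T) (ML T u y) (n + 1) false = V (wR T u y 0) (MR T u y) n true
      + (1 + T * y n) * V (wR T u y 0) (MR T u y) n false := by
  induction n with
  | zero => constructor <;> simp [V, tw, ML, wR, xw] <;> ring
  | succ n ih =>
    obtain ⟨h1, h2⟩ := ih
    constructor
    · rw [V, h1, h2]; simp [V, tw, ML, MR, wR, xw]; ring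
    · rw [V, h1, h2]; simp [V, tw, ML, MR, wR, xw]; ring

lemma poly_id {K : Type*} [CommRing K] (T : K) (u y : ℕ → K) (n : ℕ) :
    ∑ s : Fin (n + 2) → Bool, tw T (s 0) * (∏ i : Fin (n + 1), ML T u y i (s i.castSucc) (s i.succ))
    = (1 + T) * ∑ s : Fin (n + 1) → Bool,
      wR T u y 0 (s 0) * (∏ i : Fin n, MR T u y i (s i.castSucc) (s i.succ)) := by
  have h1 := transfer (tw T) (ML T u y) (n + 1) (fun _ => 1)
  have h2 := transfer (wR T u y 0) (MR T u y) n (fun _ => 1)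
  simp only [mul_one] at h1 h2
  rw [h1, h2, (V_rel T u y n).1, (V_rel T u y n).2]
  ring

lemma fi_plus {K : Type*} [Field K] (q : K) (hq : ∀ n : ℕ, 1 ≤ n → q ^ n ≠ 1) (a : ℤ) (c : Bool) :
    fi q (a + e c) = (if c then 1 else 1 - q ^ (a + 1)) * fi q (a + 1) := by
  cases c
  · have := fi_pred q hq (a + 1)
    simpa [e] using this
  · simp [e]

lemma fi_minus {K : Type*} [Field K] (q : K) (hq : ∀ n : ℕ, 1 ≤ n → q ^ n ≠ 1) (a : ℤ) (c : Bool) :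
    fi q (a - e c) = (if c then 1 - q ^ a else 1) * fi q a := by
  cases c
  · simp [e]
  · have := fi_pred q hq a
    simpa [e] using this

lemma zpow_add_nn {K : Type*} [Field K] (q : K) (a b : ℤ) (ha : 0 ≤ a) (hb : 0 ≤ b) :
    q ^ (a + b) = q ^ a * q ^ b := by
  obtain ⟨m, rfl⟩ := Int.eq_ofNat_of_zero_le ha
  obtain ⟨k, rfl⟩ := Int.eq_ofNat_of_zero_le hb
  have : ((m : ℤ) + k) = ((m + k : ℕ) : ℤ) := by push_cast; rfl
  rw [this, zpow_natCast, zpow_natCast, zpow_natCast, pow_add]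

lemma fi_ne {K : Type*} [Field K] {q : K} {a : ℤ} (h : fi q a ≠ 0) : 0 ≤ a := by
  by_contra h'
  exact h (if_pos (by omega))

lemma kernel {K : Type*} [Field K] (q : K) (hq : ∀ n : ℕ, 1 ≤ n → q ^ n ≠ 1) (T : K)
    (a v : ℕ → ℤ) (n : ℕ) :
    ∑ s : Fin (n + 2) → Bool, (∏ i, tw T (s i)) *
      (∏ i : Fin (n + 1), xw (q ^ (a i - a (i + 1) + 1)) (s i.castSucc) (s i.succ)) *
      (∏ i : Fin (n + 1), (fi q (a i + e (s i.castSucc) - v i) *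
        fi q (v i - (a (i + 1) + e (s i.succ)))))
    = (1 + T) * ∑ s : Fin (n + 1) → Bool, (∏ i, tw T (s i)) *
      (∏ i : Fin n, xw (q ^ (v i - v (i + 1) + 1)) (s i.succ) (s i.castSucc)) *
      (∏ i : Fin (n + 1), (fi q (a i - (v i - e (s i))) *
        fi q (v i - e (s i) - a (i + 1)))) := by
  set F : K := ∏ i : Fin (n + 1), (fi q (a i - v i + 1) * fi q (v i - a (i + 1))) with hF
  have hL (s : Fin (n + 2) → Bool) : (∏ i : Fin (n + 1), (fi q (a i + e (s i.castSucc) - v i) *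
        fi q (v i - (a (i + 1) + e (s i.succ))))) =
        (∏ i : Fin (n + 1), ((if s i.castSucc then 1 else 1 - q ^ (a i - v i + 1)) *
          (if s i.succ then 1 - q ^ (v i - a (i + 1)) else 1))) * F := by
    rw [hF, ← Finset.prod_mul_distrib]
    refine Finset.prod_congr rfl fun i _ => ?_
    rw [show a i + e (s i.castSucc) - v i = (a i - v i) + e (s i.castSucc) by ring,
      show v i - (a (i + 1) + e (s i.succ)) = (v i - a (i + 1)) - e (s i.succ) by ring,
      fi_plus q hq, fi_minus q hq]
    ring
  have hR (s : Fin (n + 1) → Bool) : (∏ i : Fin (n + 1), (fi q (a i - (v i - e (s i))) *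
        fi q (v i - e (s i) - a (i + 1)))) =
        (∏ i : Fin (n + 1), (if s i then 1 - q ^ (v i - a (i + 1)) else 1 - q ^ (a i - v i + 1))) * F := by
    rw [hF, ← Finset.prod_mul_distrib]
    refine Finset.prod_congr rfl fun i _ => ?_
    rw [show a i - (v i - e (s i)) = (a i - v i) + e (s i) by ring,
      show v i - e (s i) - a (i + 1) = (v i - a (i + 1)) - e (s i) by ring,
      fi_plus q hq, fi_minus q hq]
    cases s i <;> simp <;> ring
  simp only [hL, hR]
  by_cases hF0 : F = 0
  · simp [hF0]
  have hF1 := Finset.prod_ne_zero_iff.mp hF0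
  have hu (i : Fin (n + 1)) : 0 ≤ a i - v i + 1 := fi_ne (left_ne_zero_of_mul (hF1 i (mem_univ i)))
  have hy (i : Fin (n + 1)) : 0 ≤ v i - a (i + 1) := fi_ne (right_ne_zero_of_mul (hF1 i (mem_univ i)))
  have key := poly_id T (fun i => q ^ (a i - v i + 1)) (fun i => q ^ (v i - a (i + 1))) n
  simp only [← mul_assoc, ← Finset.sum_mul]
  congr 1
  convert key using 2
  · rename_i s _
    rw [Fin.prod_univ_succ, mul_assoc, mul_assoc, ← Finset.prod_mul_distrib, ← Finset.prod_mul_distrib]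
    congr 1
    refine Finset.prod_congr rfl fun i _ => ?_
    simp only [ML]
    rw [← zpow_add_nn q _ _ (hu i) (hy i)]
    rw [show a i - v i + 1 + (v i - a (i + 1)) = a i - a (i + 1) + 1 by ring]
    ring
  · refine Finset.sum_congr rfl fun s _ => ?_
    rw [mul_right_comm, ← Finset.prod_mul_distrib, Fin.prod_univ_succ, mul_assoc,
      ← Finset.prod_mul_distrib]
    simp only [MR, wR]
    congr 1
    refine Finset.prod_congr rfl fun i _ => ?_
    rw [← zpow_add_nn q _ _ (by simpa using hy i.castSucc) (by simpa using hu i.succ)]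
    simp only [Fin.val_succ]
    rw [show v i - a (i + 1) + (a (i+1) - v (i+1) + 1) = v i - v (i + 1) + 1 by ring]
    ring

/-- The one-step kernel. -/
noncomputable def ker {K : Type*} [Field K] (q : K) (n : ℕ) (zl : K)
    (p : Fin (n + 2) → ℤ) (m : Fin (n + 1) → ℤ) : K :=
  zl ^ ((∑ i, p i) - ∑ i, m i) * (∏ i : Fin n, qfac q (m i.castSucc - m i.succ)) *
    ∏ i : Fin (n + 1), (fi q (p i.castSucc - m i) * fi q (m i - p i.succ))

lemma ker_ne {K : Type*} [Field K] {q : K} {n : ℕ} {zl : K}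
    {p : Fin (n + 2) → ℤ} {m : Fin (n + 1) → ℤ} (h : ker q n zl p m ≠ 0) (i : Fin (n + 1)) :
    m i ≤ p i.castSucc ∧ p i.succ ≤ m i := by
  have h1 := Finset.prod_ne_zero_iff.mp (right_ne_zero_of_mul h) i (mem_univ i)
  have h2 := fi_ne (left_ne_zero_of_mul h1)
  have h3 := fi_ne (right_ne_zero_of_mul h1)
  constructor <;> omega

lemma whit_zero_of_not {K : Type*} [Field K] (q : K) (n : ℕ) (z : Fin (n + 1) → K)
    (p : Fin (n + 1) → ℤ) (h : ¬ ∀ k : Fin n, p k.succ ≤ p k.castSucc) : whit q n z p = 0 := by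
  unfold whit
  exact if_neg h

lemma whit_base {K : Type*} [Field K] (q : K) (z : Fin 1 → K) (p : Fin 1 → ℤ) :
    whit q 0 z p = z 0 ^ p 0 := by
  classical
  unfold whit
  rw [if_pos (fun k => k.elim0)]
  rw [Finset.sum_eq_single (fun k i => p 0)]
  · simp [gzWeight]
  · intro g hg hne
    exfalso
    apply hne
    funext k i
    simp only [mem_filter] at hg
    obtain rfl : k = Fin.last 0 := Subsingleton.elim (α := Fin 1) _ _
    rw [hg.2.2]
    congr 1
    exact Subsingleton.elim (α := Fin 1) _ _
  · intro hg
    exfalso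
    apply hg
    simp only [mem_filter, mem_Icc]
    refine ⟨⟨fun k i => le_rfl, fun k i => le_rfl⟩, fun k => k.elim0, ?_⟩
    funext i
    congr 1
    exact Subsingleton.elim (α := Fin 1) _ _

lemma IsGZ_bound {n : ℕ} {g : ∀ k : Fin (n + 1), Fin ((k : ℕ) + 1) → ℤ} (hg : IsGZ g) :
    ∀ (d : ℕ) (k : Fin (n + 1)), n = k + d → ∀ i : Fin ((k : ℕ) + 1),
      ∃ j j' : Fin (n + 1), g (Fin.last n) j ≤ g k i ∧ g k i ≤ g (Fin.last n) j' := by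
  intro d
  induction d with
  | zero =>
    intro k hk i
    obtain rfl : k = Fin.last n := Fin.ext (by simpa using hk.symm)
    exact ⟨i, i, le_rfl, le_rfl⟩
  | succ d ih =>
    intro k hk i
    obtain ⟨k', rfl⟩ : ∃ k' : Fin n, k = k'.castSucc := ⟨⟨k, by omega⟩, rfl⟩
    have h := hg k' i
    have hk2 : n = (k'.succ : Fin (n + 1)) + d := by
      simp at hk ⊢; omega
    obtain ⟨j, -, h1, -⟩ := ih k'.succ hk2 i.succ
    obtain ⟨-, j', -, h2⟩ := ih k'.succ hk2 i.castSucc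
    exact ⟨j, j', h1.trans h.2, h.1.trans h2⟩

lemma dom_anti {n : ℕ} {p : Fin (n + 1) → ℤ} (h : ∀ k : Fin n, p k.succ ≤ p k.castSucc) :
    Antitone p := Fin.antitone_iff_succ_le.mpr h

/-- membership in the summation set is just: GZ pattern over `p`. -/
lemma mem_box {n : ℕ} {p : Fin (n + 1) → ℤ} (hp : ∀ k : Fin n, p k.succ ≤ p k.castSucc)
    {g : ∀ k : Fin (n + 1), Fin ((k : ℕ) + 1) → ℤ} (hg : IsGZ g) (hl : g (Fin.last n) = p) :
    g ∈ (Finset.Icc (fun (k : Fin (n + 1)) (_ : Fin ((k : ℕ) + 1)) => p (Fin.last n))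
        (fun (k : Fin (n + 1)) (_ : Fin ((k : ℕ) + 1)) => p ⟨0, n.succ_pos⟩)) := by
  rw [mem_Icc]
  have hanti := dom_anti hp
  constructor <;> intro k i <;>
    obtain ⟨j, j', h1, h2⟩ := IsGZ_bound hg (n - k) k (by omega) i <;> rw [hl] at h1 h2
  · exact (hanti (Fin.le_last j)).trans h1
  · exact h2.trans (hanti (Fin.zero_le j'))

/-- Append a top row. -/
def app {n : ℕ} (g : ∀ k : Fin (n + 1), Fin ((k : ℕ) + 1) → ℤ) (p : Fin (n + 2) → ℤ) :
    ∀ k : Fin (n + 2), Fin ((k : ℕ) + 1) → ℤ :=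
  Fin.snoc (α := fun k : Fin (n + 2) => Fin ((k : ℕ) + 1) → ℤ) g p

lemma app_castSucc {n : ℕ} (g : ∀ k : Fin (n + 1), Fin ((k : ℕ) + 1) → ℤ) (p : Fin (n + 2) → ℤ)
    (k : Fin (n + 1)) : app g p k.castSucc = g k :=
  Fin.snoc_castSucc (α := fun k : Fin (n + 2) => Fin ((k : ℕ) + 1) → ℤ) _ _ k

lemma app_last {n : ℕ} (g : ∀ k : Fin (n + 1), Fin ((k : ℕ) + 1) → ℤ) (p : Fin (n + 2) → ℤ) :
    app g p (Fin.last (n + 1)) = p :=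
  Fin.snoc_last (α := fun k : Fin (n + 2) => Fin ((k : ℕ) + 1) → ℤ) _ _

lemma app_sc {n : ℕ} (g : ∀ k : Fin (n + 1), Fin ((k : ℕ) + 1) → ℤ) (p : Fin (n + 2) → ℤ)
    (k : Fin n) : app g p k.castSucc.succ = g k.succ := app_castSucc g p k.succ

lemma app_sl {n : ℕ} (g : ∀ k : Fin (n + 1), Fin ((k : ℕ) + 1) → ℤ) (p : Fin (n + 2) → ℤ) :
    app g p (Fin.last n).succ = p := app_last g p

lemma app_IsGZ {n : ℕ} (g : ∀ k : Fin (n + 1), Fin ((k : ℕ) + 1) → ℤ) (p : Fin (n + 2) → ℤ) :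
    IsGZ (app g p) ↔ IsGZ g ∧ ∀ i : Fin (n + 1), g (Fin.last n) i ≤ p i.castSucc ∧
      p i.succ ≤ g (Fin.last n) i := by
  constructor
  · intro h
    refine ⟨fun k i => ?_, fun i => ?_⟩
    · have h1 := h k.castSucc i
      rw [app_castSucc, app_sc] at h1
      exact h1
    · have h1 := h (Fin.last n) i
      rw [app_castSucc, app_sl] at h1
      exact h1
  · rintro ⟨h1, h2⟩ k
    induction k using Fin.lastCases with
    | last =>
      intro i
      rw [app_castSucc, app_sl]
      exact h2 i
    | cast k =>
      intro i
      rw [app_castSucc, app_sc]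
      exact h1 k i

lemma app_weight {K : Type*} [Field K] (q : K) {n : ℕ} (z : Fin (n + 2) → K)
    (g : ∀ k : Fin (n + 1), Fin ((k : ℕ) + 1) → ℤ) (p : Fin (n + 2) → ℤ)
    (h : ∀ i : Fin (n + 1), g (Fin.last n) i ≤ p i.castSucc ∧ p i.succ ≤ g (Fin.last n) i) :
    gzWeight q z (app g p) = ker q n (z (Fin.last (n + 1))) p (g (Fin.last n)) *
      gzWeight q (fun i => z i.castSucc) g := by
  have hphi : ∏ i : Fin (n + 1), (fi q (p i.castSucc - g (Fin.last n) i) *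
      fi q (g (Fin.last n) i - p i.succ)) = (∏ i : Fin (n + 1),
        (qfac q (p i.castSucc - g (Fin.last n) i) * qfac q (g (Fin.last n) i - p i.succ)))⁻¹ := by
    rw [← Finset.prod_inv_distrib]
    refine Finset.prod_congr rfl fun i _ => ?_
    have := h i
    unfold fi
    rw [if_neg (by omega), if_neg (by omega), mul_inv]
  unfold ker
  rw [hphi]
  unfold gzWeight
  have h0 : app g p ⟨0, (n + 1).succ_pos⟩ = g ⟨0, n.succ_pos⟩ := app_castSucc g p ⟨0, n.succ_pos⟩
  have e1 : (∏ k : Fin (n + 1), z k.succ ^ ((∑ i, app g p k.succ i) - ∑ i, app g p k.castSucc i))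
      = (∏ k : Fin n, z k.succ.castSucc ^ ((∑ i, g k.succ i) - ∑ i, g k.castSucc i)) *
        z (Fin.last (n + 1)) ^ ((∑ i, p i) - ∑ i : Fin (n + 1), g (Fin.last n) i) := by
    rw [Fin.prod_univ_castSucc]
    simp only [app_sc, app_sl, app_castSucc]
    rfl
  have e2 : (∏ k : Fin (n + 1), ∏ i : Fin (k : ℕ),
      qfac q (app g p k.castSucc i.castSucc - app g p k.castSucc i.succ))
      = (∏ k : Fin n, ∏ i : Fin (k : ℕ), qfac q (g k.castSucc i.castSucc - g k.castSucc i.succ)) *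
        (∏ i : Fin n, qfac q (g (Fin.last n) i.castSucc - g (Fin.last n) i.succ)) := by
    rw [Fin.prod_univ_castSucc]
    simp only [app_castSucc]
    rfl
  have e3 : (∏ k : Fin (n + 1), ∏ i : Fin ((k : ℕ) + 1),
      (qfac q (app g p k.succ i.castSucc - app g p k.castSucc i) *
       qfac q (app g p k.castSucc i - app g p k.succ i.succ)))
      = (∏ k : Fin n, ∏ i : Fin ((k : ℕ) + 1), (qfac q (g k.succ i.castSucc - g k.castSucc i) *
       qfac q (g k.castSucc i - g k.succ i.succ))) *
       ∏ i : Fin (n + 1),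
        (qfac q (p i.castSucc - g (Fin.last n) i) * qfac q (g (Fin.last n) i - p i.succ)) := by
    rw [Fin.prod_univ_castSucc]
    simp only [app_sc, app_sl, app_castSucc]
    rfl
  rw [h0, e1, e2, e3, mul_inv]
  have h9 : z ⟨0, (n + 1).succ_pos⟩ = z (Fin.castSucc ⟨0, n.succ_pos⟩) := rfl
  rw [h9]
  ring

lemma whit_succ {K : Type*} [Field K] (q : K) (n : ℕ) (z : Fin (n + 2) → K)
    (p : Fin (n + 2) → ℤ) :
    whit q (n + 1) z p = ∑ᶠ m : Fin (n + 1) → ℤ,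
      ker q n (z (Fin.last (n + 1))) p m * whit q n (fun i => z i.castSucc) m := by
  classical
  have hsupp : (Function.support fun m : Fin (n + 1) → ℤ =>
      ker q n (z (Fin.last (n + 1))) p m * whit q n (fun i => z i.castSucc) m) ⊆
      (Finset.Icc (fun i : Fin (n + 1) => p i.succ) (fun i => p i.castSucc) : Finset _) := by
    intro m hm
    have h := ker_ne (left_ne_zero_of_mul hm)
    rw [Finset.mem_coe, mem_Icc]
    exact ⟨fun i => (h i).2, fun i => (h i).1⟩
  rw [finsum_eq_sum_of_support_subset _ hsupp]
  by_cases hp : ∀ k : Fin (n + 1), p k.succ ≤ p k.castSucc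
  swap
  · rw [whit_zero_of_not _ _ _ _ hp]
    symm
    apply Finset.sum_eq_zero
    intro m hm
    exfalso
    apply hp
    intro k
    rw [mem_Icc] at hm
    exact (hm.1 k).trans (hm.2 k)
  have hdom : ∀ m ∈ Finset.Icc (fun i : Fin (n + 1) => p i.succ) (fun i => p i.castSucc),
      ∀ k : Fin n, m k.succ ≤ m k.castSucc := by
    intro m hm k
    rw [mem_Icc] at hm
    exact (hm.2 k.succ).trans (hm.1 k.castSucc)
  unfold whit
  rw [if_pos hp]
  have : ∀ m ∈ Finset.Icc (fun i : Fin (n + 1) => p i.succ) (fun i => p i.castSucc),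
    ker q n (z (Fin.last (n + 1))) p m *
      (if ∀ k : Fin n, m k.succ ≤ m k.castSucc then
        ∑ g ∈ (Finset.Icc (fun (k : Fin (n + 1)) (_ : Fin ((k : ℕ) + 1)) => m (Fin.last n))
        (fun (k : Fin (n + 1)) (_ : Fin ((k : ℕ) + 1)) => m ⟨0, n.succ_pos⟩)).filter
        (fun g => IsGZ g ∧ g (Fin.last n) = m), gzWeight q (fun i => z i.castSucc) g else 0) =
     ∑ g ∈ (Finset.Icc (fun (k : Fin (n + 1)) (_ : Fin ((k : ℕ) + 1)) => m (Fin.last n))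
        (fun (k : Fin (n + 1)) (_ : Fin ((k : ℕ) + 1)) => m ⟨0, n.succ_pos⟩)).filter
        (fun g => IsGZ g ∧ g (Fin.last n) = m),
        ker q n (z (Fin.last (n + 1))) p m * gzWeight q (fun i => z i.castSucc) g := by
    intro m hm
    rw [if_pos (hdom m hm), Finset.mul_sum]
  rw [Finset.sum_congr rfl this, Finset.sum_sigma']
  symm
  refine Finset.sum_bij' (fun x _ => app x.2 p)
    (fun g _ => ⟨g (Fin.last n).castSucc, fun k => g k.castSucc⟩) ?_ ?_ ?_ ?_ ?_
  · rintro ⟨m, g⟩ hx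
    simp only [mem_sigma, mem_filter] at hx ⊢
    obtain ⟨h1, h2, h3, rfl⟩ := hx
    rw [mem_Icc] at h1
    have h5 : IsGZ (app g p) := (app_IsGZ g p).mpr ⟨h3, fun i => ⟨h1.2 i, h1.1 i⟩⟩
    exact ⟨mem_box hp h5 (app_last g p), h5, app_last g p⟩
  · intro g hg
    simp only [mem_sigma, mem_filter] at hg ⊢
    obtain ⟨h1, h2, h3⟩ := hg
    have hg : g = app (fun k => g k.castSucc) p := by
      funext k
      induction k using Fin.lastCases with
      | last => rw [app_last, h3]
      | cast k => rw [app_castSucc]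
    have h4 := h2
    rw [hg, app_IsGZ] at h4
    have h5 : g (Fin.last n).castSucc ∈
        Finset.Icc (fun i : Fin (n + 1) => p i.succ) (fun i => p i.castSucc) := by
      rw [mem_Icc]
      exact ⟨fun i => (h4.2 i).2, fun i => (h4.2 i).1⟩
    exact ⟨h5, mem_box (hdom _ h5) h4.1 rfl, h4.1, trivial⟩
  · rintro ⟨m, g⟩ hx
    simp only [mem_sigma, mem_filter] at hx ⊢
    obtain ⟨h1, h2, h3, rfl⟩ := hx
    simp only [app_castSucc]
  · intro g hg
    simp only [mem_filter] at hg
    funext k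
    induction k using Fin.lastCases with
    | last => rw [app_last, hg.2.2]
    | cast k => rw [app_castSucc]
  · rintro ⟨m, g⟩ hx
    simp only [mem_sigma, mem_filter] at hx ⊢
    obtain ⟨h1, h2, h3, rfl⟩ := hx
    rw [mem_Icc] at h1
    rw [app_weight]
    exact fun i => ⟨h1.2 i, h1.1 i⟩

/-- shift -/
def sh {n : ℕ} (p : Fin n → ℤ) (s : Fin n → Bool) : Fin n → ℤ := fun i => p i + e (s i)

/-- The generating function version. -/
lemma tw_mul {K : Type*} [Field K] {m : ℕ} (t zl : K) (hz : zl ≠ 0) (s : Fin m → Bool) :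
    (∏ i, tw (t * zl) (s i)) = (∏ i, tw t (s i)) * zl ^ (∑ i, e (s i)) := by
  have : zl ^ (∑ i, e (s i)) = ∏ i, tw zl (s i) := by
    induction m with
    | zero => simp
    | succ m ih =>
      rw [Fin.sum_univ_succ, Fin.prod_univ_succ, zpow_add₀ hz, ih (fun i => s i.succ)]
      cases s 0 <;> simp [e, tw]
  rw [this, ← Finset.prod_mul_distrib]
  refine Finset.prod_congr rfl fun i _ => ?_
  cases s i <;> simp [tw]

lemma ext_nat {m : ℕ} (p : Fin m → ℤ) : ∃ a : ℕ → ℤ, p = fun i : Fin m => a i :=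
  ⟨fun k => if h : k < m then p ⟨k, h⟩ else 0, by funext i; simp⟩

/-- `Δ_μ X_J(μ) = A_J Δ_ν`. -/
lemma delta_rel {K : Type*} [Field K] (q : K) (n : ℕ) (v : Fin (n + 1) → ℤ) (s : Fin (n + 1) → Bool)
    (h1 : ∀ k : Fin n, v k.succ ≤ v k.castSucc)
    (h2 : ∀ k : Fin n, v k.succ - e (s k.succ) ≤ v k.castSucc - e (s k.castSucc)) :
    (∏ i : Fin n, qfac q ((v i.castSucc - e (s i.castSucc)) - (v i.succ - e (s i.succ)))) *
    (∏ i : Fin n, xw (q ^ ((v i.castSucc - e (s i.castSucc)) - (v i.succ - e (s i.succ)) + 1))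
      (s i.castSucc) (s i.succ)) =
    (∏ i : Fin n, xw (q ^ (v i.castSucc - v i.succ + 1)) (s i.succ) (s i.castSucc)) *
    (∏ i : Fin n, qfac q (v i.castSucc - v i.succ)) := by
  rw [← Finset.prod_mul_distrib, ← Finset.prod_mul_distrib]
  refine Finset.prod_congr rfl fun i _ => ?_
  have h1 := h1 i
  have h2 := h2 i
  generalize v i.castSucc = x at *
  generalize v i.succ = y at *
  generalize s i.castSucc = c at *
  generalize s i.succ = d at *
  cases c <;> cases d <;> simp [e, xw] at h1 h2 ⊢
  · have := qfac_succ q (x - y) (by omega)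
    rw [show x - (y - 1) = x - y + 1 by ring, this]
  · have := qfac_succ q (x - y - 1) (by omega)
    rw [sub_add_cancel] at this
    rw [show x - 1 - y = x - y - 1 by ring, sub_add_cancel, this, mul_comm]

theorem main_gen {K : Type*} [Field K] (q : K) (hq : ∀ n : ℕ, 1 ≤ n → q ^ n ≠ 1) (t : K) (n : ℕ) :
    ∀ (z : Fin (n + 1) → K) (_ : ∀ i, z i ≠ 0) (p : Fin (n + 1) → ℤ),
    ∑ s : Fin (n + 1) → Bool, (∏ i, tw t (s i)) *
      (∏ i : Fin n, xw (q ^ (p i.castSucc - p i.succ + 1)) (s i.castSucc) (s i.succ)) *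
      whit q n z (sh p s) = (∏ i, (1 + t * z i)) * whit q n z p := by
  induction n with
  | zero =>
    intro z hz p
    rw [sum_snoc]
    simp [whit_base, sh, Fin.snoc, tw, e, zpow_add₀ (hz 0)]
    ring
  | succ n ih =>
    intro z hz p
    set zl := z (Fin.last (n + 1)) with hzl
    have hzl0 : zl ≠ 0 := hz _
    set z' : Fin (n + 1) → K := fun i => z i.castSucc with hz'
    have ih' := ih z' (fun i => hz _)
    have hfin (p : Fin (n + 2) → ℤ) : (Function.support fun m => ker q n zl p m).Finite := by
      apply (Finset.Icc (fun i : Fin (n + 1) => p i.succ) (fun i => p i.castSucc)).finite_toSet.subset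
      intro m hm
      have h := ker_ne hm
      rw [Finset.mem_coe, mem_Icc]
      exact ⟨fun i => (h i).2, fun i => (h i).1⟩
    have hfin1 (p : Fin (n + 2) → ℤ) (c : (Fin (n + 1) → ℤ) → K) :
        (Function.support fun m => ker q n zl p m * c m).Finite :=
      (hfin p).subset fun m hm => left_ne_zero_of_mul hm
    simp only [whit_succ]
    simp only [← hzl, ← hz']
    have hL : ∑ s : Fin (n + 2) → Bool, (∏ i, tw t (s i)) *
      (∏ i : Fin (n + 1), xw (q ^ (p i.castSucc - p i.succ + 1)) (s i.castSucc) (s i.succ)) *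
      (∑ᶠ m, ker q n zl (sh p s) m * whit q n z' m) = ∑ᶠ m, ∑ s : Fin (n + 2) → Bool,
      (∏ i, tw t (s i)) *
      (∏ i : Fin (n + 1), xw (q ^ (p i.castSucc - p i.succ + 1)) (s i.castSucc) (s i.succ)) *
      (ker q n zl (sh p s) m * whit q n z' m) := by
      rw [finsum_sum_comm]
      · refine Finset.sum_congr rfl fun s _ => ?_
        rw [mul_finsum]
      · intro s _
        exact (hfin (sh p s)).subset fun m hm =>
          left_ne_zero_of_mul (right_ne_zero_of_mul hm)
    have hR : (∏ i, (1 + t * z i)) * (∑ᶠ m, ker q n zl p m * whit q n z' m) =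
      ∑ᶠ m, ∑ s : Fin (n + 1) → Bool, (1 + t * zl) * (
      (∏ i, tw t (s i)) *
      (∏ i : Fin n, xw (q ^ ((m i.castSucc - e (s i.castSucc)) - (m i.succ - e (s i.succ)) + 1))
        (s i.castSucc) (s i.succ)) *
      (ker q n zl p (fun i => m i - e (s i)) * whit q n z' m)) := by
      rw [finsum_sum_comm]
      · have hsh (s : Fin (n + 1) → Bool) := finsum_comp_equiv (Equiv.addRight (fun i => e (s i)))
          (f := fun m : Fin (n + 1) → ℤ => (1 + t * zl) * (
      (∏ i, tw t (s i)) *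
      (∏ i : Fin n, xw (q ^ ((m i.castSucc - e (s i.castSucc)) - (m i.succ - e (s i.succ)) + 1))
        (s i.castSucc) (s i.succ)) *
      (ker q n zl p (fun i => m i - e (s i)) * whit q n z' m)))
        simp only [← hsh]
        rw [← finsum_sum_comm]
        · rw [mul_finsum]
          refine finsum_congr fun m => ?_
          rw [Fin.prod_univ_castSucc, ← hzl]
          rw [show (∏ i : Fin (n + 1), (1 + t * z i.castSucc)) * (1 + t * zl) *
            (ker q n zl p m * whit q n z' m) = (1 + t * zl) * ker q n zl p m *
            ((∏ i : Fin (n + 1), (1 + t * z' i)) * whit q n z' m) by rw [hz']; ring, ← ih', Finset.mul_sum]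
          refine Finset.sum_congr rfl fun s _ => ?_
          simp only [Equiv.coe_addRight, Pi.add_apply, add_sub_cancel_right]
          have : m + (fun i => e (s i)) = sh m s := rfl
          rw [this]
          ring
        · intro s _
          refine (hfin p).subset fun m hm => ?_
          have := left_ne_zero_of_mul (right_ne_zero_of_mul (right_ne_zero_of_mul hm))
          simpa using this
      · intro s _
        have := (hfin p).preimage (f := fun (m : Fin (n + 1) → ℤ) i => m i - e (s i)) (by
          intro a _ b _ hab
          funext i
          have := congrFun hab i
          simpa using this)
        refine this.subset fun m hm => ?_
        exact left_ne_zero_of_mul (right_ne_zero_of_mul (right_ne_zero_of_mul hm))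
    rw [hL, hR]
    refine finsum_congr fun m => ?_
    by_cases hm : ∀ k : Fin n, m k.succ ≤ m k.castSucc
    swap
    · simp [whit_zero_of_not _ _ _ _ hm]
    obtain ⟨a, rfl⟩ := ext_nat p
    obtain ⟨v, rfl⟩ := ext_nat m
    have hk := kernel q hq (t * zl) a v n
    have hk2 := congrArg (fun x => x * (zl ^ ((∑ i : Fin (n + 2), a i) - ∑ i : Fin (n + 1), v i) *
      (∏ i : Fin n, qfac q (v i - v (i + 1))) * whit q n z' (fun i => v i))) hk
    simp only [Finset.sum_mul, Finset.mul_sum] at hk2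
    convert hk2 using 1
    · refine Finset.sum_congr rfl fun s _ => ?_
      rw [tw_mul t zl hzl0]
      simp only [ker, sh, Fin.val_castSucc, Fin.val_succ, Finset.sum_add_distrib]
      rw [show (∑ i : Fin (n + 2), a i) + (∑ i, e (s i)) - ∑ i : Fin (n + 1), v i =
        ((∑ i : Fin (n + 2), a i) - ∑ i : Fin (n + 1), v i) + (∑ i, e (s i)) by ring,
        zpow_add₀ hzl0]
      ring
    · refine Finset.sum_congr rfl fun s _ => ?_
      rw [tw_mul t zl hzl0]
      by_cases hphi : (∏ i : Fin (n + 1), (fi q (a i - (v i - e (s i))) *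
        fi q (v i - e (s i) - a (i + 1)))) = 0
      · simp [ker, hphi]
      have hphi' := Finset.prod_ne_zero_iff.mp hphi
      have hd := delta_rel q n (fun i => v i) s hm (by
        intro k
        have b1 := fi_ne (right_ne_zero_of_mul (hphi' k.castSucc (mem_univ _)))
        have b2 := fi_ne (left_ne_zero_of_mul (hphi' k.succ (mem_univ _)))
        simp at b1 b2 ⊢
        omega)
      simp only [Fin.val_castSucc, Fin.val_succ] at hd
      simp only [ker, Fin.val_castSucc, Fin.val_succ, Finset.sum_sub_distrib]
      rw [show (∑ i : Fin (n + 2), a i) - ((∑ i : Fin (n + 1), v i) - (∑ i, e (s i))) =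
        ((∑ i : Fin (n + 2), a i) - ∑ i : Fin (n + 1), v i) + (∑ i, e (s i)) by ring,
        zpow_add₀ hzl0]
      generalize (∏ i : Fin (n + 1), (fi q (a i - (v i - e (s i))) *
        fi q (v i - e (s i) - a (i + 1)))) = Φ at *
      linear_combination ((1 + t * zl) * (∏ i, tw t (s i)) * Φ * whit q n z' (fun i => v i) *
        zl ^ ((∑ i : Fin (n + 2), a i) - ∑ i : Fin (n + 1), v i) * zl ^ (∑ i, e (s i))) * hd

lemma whit_map {K L : Type*} [Field K] [Field L] (φ : K →+* L) (q : K) (n : ℕ) (z : Fin (n + 1) → K)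
    (p : Fin (n + 1) → ℤ) : φ (whit q n z p) = whit (φ q) n (fun i => φ (z i)) p := by
  unfold whit
  split_ifs
  · simp [gzWeight, qfac, map_sum, map_prod, map_inv₀, map_zpow₀]
  · simp

/-- subsets as indicator functions -/
def sub (m : ℕ) : Finset (Fin m) ≃ (Fin m → Bool) where
  toFun I := fun i => decide (i ∈ I)
  invFun s := univ.filter (fun i => s i = true)
  left_inv I := by ext; simp
  right_inv s := by funext i; simp

/-- Hamiltonian coefficient as in the statement. -/
noncomputable def coefH {K : Type*} [Field K] (q : K) (l : ℕ) (p : Fin (l + 1) → ℤ)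
    (I : Finset (Fin (l + 1))) : K :=
  (∏ i ∈ I, (if h : (i : ℕ) + 1 < l + 1 then
          (if (⟨(i : ℕ) + 1, h⟩ : Fin (l + 1)) ∈ I then 1
           else 1 - q ^ (p i - p ⟨(i : ℕ) + 1, h⟩ + 1)) else 1))

lemma coefH_eq {K : Type*} [Field K] (q : K) (l : ℕ) (p : Fin (l + 1) → ℤ)
    (I : Finset (Fin (l + 1))) : coefH q l p I =
    ∏ i : Fin l, xw (q ^ (p i.castSucc - p i.succ + 1)) (decide (i.castSucc ∈ I))
      (decide (i.succ ∈ I)) := by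
  unfold coefH
  rw [← Finset.prod_ite_mem_eq, Fin.prod_univ_castSucc]
  simp only [Fin.val_last, lt_irrefl, dite_false, ite_self, mul_one]
  refine Finset.prod_congr rfl fun i _ => ?_
  have h : ((i.castSucc : Fin (l + 1)) : ℕ) + 1 < l + 1 := by simp
  rw [dif_pos h]
  have h2 : (⟨((i.castSucc : Fin (l + 1)) : ℕ) + 1, h⟩ : Fin (l + 1)) = i.succ := rfl
  rw [h2]
  by_cases h3 : i.castSucc ∈ I <;> by_cases h4 : i.succ ∈ I <;> simp [xw, h3, h4]

lemma tw_card {K : Type*} [Field K] {m : ℕ} (t : K) (I : Finset (Fin m)) :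
    ∏ i, tw t (decide (i ∈ I)) = t ^ I.card := by
  rw [← Finset.prod_const, ← Finset.prod_ite_mem_eq]
  simp [tw]

lemma coefH_map {K L : Type*} [Field K] [Field L] (φ : K →+* L) (q : K) (l : ℕ) (p : Fin (l + 1) → ℤ)
    (I : Finset (Fin (l + 1))) : φ (coefH q l p I) = coefH (φ q) l p I := by
  rw [coefH_eq, coefH_eq, map_prod]
  refine Finset.prod_congr rfl fun i _ => ?_
  unfold xw
  split_ifs <;> simp

lemma gen_poly {K : Type*} [Field K] (q : K)
    (hq : ∀ n : ℕ, 1 ≤ n → q ^ n ≠ 1) (l : ℕ)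
    (z : Fin (l + 1) → K) (hz : ∀ i, z i ≠ 0) (p : Fin (l + 1) → ℤ) :
    ∑ I : Finset (Fin (l + 1)), (Polynomial.X : Polynomial K) ^ I.card *
      Polynomial.C (coefH q l p I * whit q l z (fun i => p i + if i ∈ I then 1 else 0)) =
    ∑ I : Finset (Fin (l + 1)), (Polynomial.X : Polynomial K) ^ I.card *
      Polynomial.C ((∏ i ∈ I, z i) * whit q l z p) := by
  apply IsFractionRing.injective (Polynomial K) (RatFunc K)
  have hinj : Function.Injective (RatFunc.C : K →+* RatFunc K) := (RatFunc.C : K →+* RatFunc K).injective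
  have h := main_gen (RatFunc.C q) (by
    intro n hn h
    apply hq n hn
    apply hinj
    simpa using h) (RatFunc.X : RatFunc K) l (fun i => RatFunc.C (z i))
    (fun i => by simpa using hz i) p
  rw [← (sub (l + 1)).sum_comp, Finset.prod_one_add, Finset.sum_mul] at h
  simp only [map_sum, map_mul, map_pow, RatFunc.algebraMap_X, RatFunc.algebraMap_C]
  rw [Finset.powerset_univ] at h
  convert h using 1
  · refine Finset.sum_congr rfl fun I _ => ?_
    simp only [sub, Equiv.coe_fn_mk]
    rw [tw_card, ← coefH_eq, coefH_map, whit_map, mul_assoc]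
    congr 3
    funext i
    simp [sh, e]
  · refine Finset.sum_congr rfl fun I _ => ?_
    rw [whit_map, Finset.prod_mul_distrib, Finset.prod_const, map_prod, mul_assoc]

lemma coeff_card {K : Type*} [Field K] {m : ℕ} (f : Finset (Fin m) → K) (r : ℕ) :
    (∑ I : Finset (Fin m), (Polynomial.X : Polynomial K) ^ I.card * Polynomial.C (f I)).coeff r =
    ∑ I ∈ Finset.powersetCard r (Finset.univ : Finset (Fin m)), f I := by
  rw [Polynomial.finsetSum_coeff]
  have : Finset.powersetCard r (Finset.univ : Finset (Fin m)) = univ.filter (fun I => r = I.card) := by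
    ext I; simp [Finset.mem_powersetCard, eq_comm]
  rw [this, Finset.sum_filter]
  refine Finset.sum_congr rfl fun I _ => ?_
  rw [mul_comm, Polynomial.coeff_C_mul_X_pow]

end QW

/-- the `q`-deformed `gl_{ℓ+1}`-Whittaker function is a common eigenfunction
of the `q`-deformed Toda Hamiltonians `𝓗_r`, with eigenvalue the `r`-th elementary
symmetric polynomial `e_r(z)`. -/
theorem whittaker_toda_eigenfunction {K : Type*} [Field K] (q : K)
    (hq : ∀ n : ℕ, 1 ≤ n → q ^ n ≠ 1) (ℓ : ℕ) (hℓ : 1 ≤ ℓ)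
    (z : Fin (ℓ + 1) → K) (hz : ∀ i, z i ≠ 0)
    (r : ℕ) (hr1 : 1 ≤ r) (hr2 : r ≤ ℓ + 1) (p : Fin (ℓ + 1) → ℤ) :
    ∑ I ∈ Finset.powersetCard r (Finset.univ : Finset (Fin (ℓ + 1))),
      (∏ i ∈ I, (if h : (i : ℕ) + 1 < ℓ + 1 then
          (if (⟨(i : ℕ) + 1, h⟩ : Fin (ℓ + 1)) ∈ I then 1
           else 1 - q ^ (p i - p ⟨(i : ℕ) + 1, h⟩ + 1)) else 1)) *
        whit q ℓ z (fun i => p i + if i ∈ I then 1 else 0)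
    = (∑ I ∈ Finset.powersetCard r (Finset.univ : Finset (Fin (ℓ + 1))), ∏ i ∈ I, z i) *
        whit q ℓ z p := by
  have h := congrArg (fun f => Polynomial.coeff f r) (QW.gen_poly q hq ℓ z hz p)
  simp only [QW.coeff_card] at h
  rw [Finset.sum_mul, ← h]
  rfl
end

section
/- Define the normalized Whittaker function Ψ̃^{(n+1)}_z(p) := (∏_{i=1}^{n}(p_i − p_{i+1})_q!) · Ψ^{(n+1)}_z(p). Then for every dominant p = (p_1,…,p_{ℓ+1}) ∈ ℤ^{ℓ+1}: Ψ̃^{(ℓ+1)}_{z_1,…,z_{ℓ+1}}(p) = Σ over s = (s_1,…,s_ℓ) ∈ ℤ^ℓ with p_i ≥ s_i ≥ p_{i+1} (1 ≤ i ≤ ℓ) of z_{ℓ+1}^{(Σ_{i=1}^{ℓ+1} p_i) − (Σ_{i=1}^{ℓ} s_i)} · (∏_{k=1}^{ℓ} C_q(p_k − p_{k+1}, s_k − p_{k+1})) · Ψ̃^{(ℓ)}_{z_1,…,z_ℓ}(s), where C_q(n, m) = (n)_q! / ((m)_q! (n−m)_q!) is the q-binomial coefficient. -/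
open Finset

/-- The `q`-binomial coefficient `C_q(n,m) = (n)_q! / ((m)_q! (n-m)_q!)`. -/
noncomputable def qbinom {K : Type*} [Field K] (q : K) (n m : ℤ) : K :=
  qfac q n / (qfac q m * qfac q (n - m))

theorem gz_bounds {n : ℕ} (g : ∀ k : Fin (n + 1), Fin ((k : ℕ) + 1) → ℤ) (hg : IsGZ g)
    (p : Fin (n + 1) → ℤ) (hp : ∀ k : Fin n, p k.succ ≤ p k.castSucc)
    (h : g (Fin.last n) = p) (k : Fin (n + 1)) :
    ∀ i, p (Fin.last n) ≤ g k i ∧ g k i ≤ p ⟨0, n.succ_pos⟩ := by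
  have ha : Antitone p := Fin.antitone_iff_succ_le.2 hp
  induction k using Fin.reverseInduction with
  | last =>
    intro i
    have e : g (Fin.last n) i = p i := congrFun h i
    rw [e]
    exact ⟨ha (Fin.le_last (n := n) i), ha (Fin.zero_le (n := n + 1) i)⟩
  | cast k ih =>
    intro i
    exact ⟨(ih i.succ).1.trans (hg k i).2, (hg k i).1.trans (ih i.castSucc).2⟩

theorem whit_eq {K : Type*} [Field K] (q : K) (n : ℕ) (z : Fin (n + 1) → K)
    (p : Fin (n + 1) → ℤ) (hp : ∀ k : Fin n, p k.succ ≤ p k.castSucc) :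
    ∃ S : Finset (∀ k : Fin (n + 1), Fin ((k : ℕ) + 1) → ℤ),
      (∀ g, g ∈ S ↔ IsGZ g ∧ g (Fin.last n) = p) ∧ whit q n z p = ∑ g ∈ S, gzWeight q z g := by
  classical
  refine ⟨_, ?_, by unfold whit; exact if_pos hp⟩
  intro g
  rw [Finset.mem_filter, Finset.mem_Icc]
  refine ⟨fun h => h.2, fun h => ⟨⟨fun k i => ?_, fun k i => ?_⟩, h⟩⟩
  · exact (gz_bounds g h.1 p hp h.2 k i).1
  · exact (gz_bounds g h.1 p hp h.2 k i).2

theorem gzWeight_succ {K : Type*} [Field K] (q : K) (m : ℕ) (z : Fin (m + 2) → K)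
    (g : ∀ k : Fin (m + 2), Fin ((k : ℕ) + 1) → ℤ) (p : Fin (m + 2) → ℤ) (s : Fin (m + 1) → ℤ)
    (hp : g (Fin.last (m + 1)) = p) (hs : g (Fin.last m).castSucc = s) :
    gzWeight q z g = z (Fin.last (m + 1)) ^ ((∑ i, p i) - ∑ i, s i) *
      (∏ i : Fin m, qfac q (s i.castSucc - s i.succ)) *
      (∏ i : Fin (m + 1), (qfac q (p i.castSucc - s i) * qfac q (s i - p i.succ)))⁻¹ *
      gzWeight q (fun i => z i.castSucc) (fun k => g k.castSucc) := by
  subst hp hs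
  unfold gzWeight
  rw [Fin.prod_univ_castSucc, Fin.prod_univ_castSucc, Fin.prod_univ_castSucc, mul_inv]
  generalize hA : z (Fin.last (m + 1)) ^ _ = A
  have : ∀ a b c d A B C : K, a * (b * A) * (c * B) * (d * C) = A * B * C * (a * b * c * d) := by
    intros; ring
  subst hA
  exact this _ _ _ _ _ _ _

theorem isGZ_succ {m : ℕ} (g : ∀ k : Fin (m + 2), Fin ((k : ℕ) + 1) → ℤ)
    (p : Fin (m + 2) → ℤ) (s : Fin (m + 1) → ℤ)
    (hp : g (Fin.last (m + 1)) = p) (hs : g (Fin.last m).castSucc = s) :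
    IsGZ g ↔ IsGZ (fun k : Fin (m + 1) => g k.castSucc) ∧
      ∀ i : Fin (m + 1), p i.succ ≤ s i ∧ s i ≤ p i.castSucc := by
  subst hp hs
  constructor
  · intro h
    exact ⟨fun k i => h k.castSucc i, fun i => ⟨(h (Fin.last m) i).2, (h (Fin.last m) i).1⟩⟩
  · rintro ⟨h1, h2⟩ k
    induction k using Fin.lastCases with
    | last => exact fun i => ⟨(h2 i).2, (h2 i).1⟩
    | cast k => exact fun i => h1 k i

theorem whit_succ {K : Type*} [Field K] (q : K) (m : ℕ)
    (z : Fin (m + 2) → K)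
    (p : Fin (m + 2) → ℤ) (hp : ∀ k : Fin (m + 1), p k.succ ≤ p k.castSucc) :
    whit q (m + 1) z p =
      ∑ s ∈ Finset.Icc (fun i : Fin (m + 1) => p i.succ) (fun i : Fin (m + 1) => p i.castSucc),
        z (Fin.last (m + 1)) ^ ((∑ i, p i) - ∑ i, s i) *
      (∏ i : Fin m, qfac q (s i.castSucc - s i.succ)) *
      (∏ i : Fin (m + 1), (qfac q (p i.castSucc - s i) * qfac q (s i - p i.succ)))⁻¹ *
        whit q m (fun i => z i.castSucc) s := by
  classical
  obtain ⟨S, hS, e⟩ := whit_eq q (m + 1) z p hp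
  rw [e]
  have hmap : ∀ g ∈ S, (g (Fin.last m).castSucc : Fin (m + 1) → ℤ) ∈
      Finset.Icc (fun i : Fin (m + 1) => p i.succ) (fun i : Fin (m + 1) => p i.castSucc) := by
    intro g hg
    have h := (hS g).1 hg
    have h2 := ((isGZ_succ g p _ h.2 rfl).1 h.1).2
    exact Finset.mem_Icc.2 ⟨fun i => (h2 i).1, fun i => (h2 i).2⟩
  rw [← Finset.sum_fiberwise_of_maps_to hmap]
  refine Finset.sum_congr rfl fun s hs => ?_
  rw [Finset.mem_Icc] at hs
  have hsd : ∀ k : Fin m, s k.succ ≤ s k.castSucc := fun k =>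
    (hs.2 k.succ).trans (hs.1 k.castSucc)
  obtain ⟨T, hT, e'⟩ := whit_eq q m (fun i => z i.castSucc) s hsd
  rw [e', Finset.mul_sum]
  refine Finset.sum_bij' (fun g _ => fun k => g k.castSucc)
    (fun g' _ => Fin.snoc (α := fun k : Fin (m + 2) => Fin ((k : ℕ) + 1) → ℤ) g' p)
    ?_ ?_ ?_ ?_ ?_
  · intro g hg
    rw [Finset.mem_filter, hS] at hg
    exact (hT _).2 ⟨((isGZ_succ g p s hg.1.2 hg.2).1 hg.1.1).1, hg.2⟩
  · intro g' hg
    rw [hT] at hg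
    have h1 : Fin.snoc (α := fun k : Fin (m + 2) => Fin ((k : ℕ) + 1) → ℤ) g' p
      (Fin.last (m + 1)) = p := Fin.snoc_last _ _
    have h2 : Fin.snoc (α := fun k : Fin (m + 2) => Fin ((k : ℕ) + 1) → ℤ) g' p
      (Fin.last m).castSucc = s := (Fin.snoc_castSucc _ _ _).trans hg.2
    rw [Finset.mem_filter, hS]
    refine ⟨⟨(isGZ_succ _ p s h1 h2).2 ⟨?_, fun i => ⟨hs.1 i, hs.2 i⟩⟩, h1⟩, h2⟩
    simpa only [Fin.snoc_castSucc] using hg.1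
  · intro g hg
    rw [Finset.mem_filter, hS] at hg
    funext k
    induction k using Fin.lastCases with
    | last => exact (Fin.snoc_last _ _).trans hg.1.2.symm
    | cast k => exact Fin.snoc_castSucc _ _ _
  · intro g' hg
    funext k
    exact Fin.snoc_castSucc _ _ _
  · intro g hg
    rw [Finset.mem_filter, hS] at hg
    exact gzWeight_succ q m z g p s hg.1.2 hg.2

/-- recursive relation for the normalized `q`-deformed Whittaker function
`Ψ̃` (here `ℓ = m + 1 ≥ 1`), with kernel given by a product of `q`-binomial coefficients
`C_q(p_k - p_{k+1}, s_k - p_{k+1})`. -/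
theorem normalized_whittaker_recursion {K : Type*} [Field K] (q : K)
    (hq : ∀ n : ℕ, 1 ≤ n → q ^ n ≠ 1) (m : ℕ)
    (z : Fin (m + 2) → K) (hz : ∀ i, z i ≠ 0)
    (p : Fin (m + 2) → ℤ) (hp : ∀ k : Fin (m + 1), p k.succ ≤ p k.castSucc) :
    nwhit q (m + 1) z p =
      ∑ s ∈ Finset.Icc (fun i : Fin (m + 1) => p i.succ) (fun i : Fin (m + 1) => p i.castSucc),
        z (Fin.last (m + 1)) ^ ((∑ i, p i) - ∑ i, s i) *
        (∏ k : Fin (m + 1), qbinom q (p k.castSucc - p k.succ) (s k - p k.succ)) *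
        nwhit q m (fun i => z i.castSucc) s := by
  unfold nwhit
  rw [whit_succ q m z p hp, Finset.mul_sum]
  refine Finset.sum_congr rfl fun s _ => ?_
  have e : (∏ k : Fin (m + 1), qbinom q (p k.castSucc - p k.succ) (s k - p k.succ)) =
      (∏ k : Fin (m + 1), qfac q (p k.castSucc - p k.succ)) *
      (∏ i : Fin (m + 1), (qfac q (p i.castSucc - s i) * qfac q (s i - p i.succ)))⁻¹ := by
    rw [← Finset.prod_inv_distrib, ← Finset.prod_mul_distrib]
    refine Finset.prod_congr rfl fun k _ => ?_
    unfold qbinom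
    rw [sub_sub_sub_cancel_right, div_eq_mul_inv, mul_comm (qfac q (s k - p k.succ))]
  rw [e]
  ring
end

section
/- Conjugation identity between the dual Hamiltonian and the q-deformed Toda Hamiltonian: let Δ(λ) := ∏_{i=1}^{ℓ}(λ_i − λ_{i+1})_q!. For every strictly dominant λ ∈ ℤ^{ℓ+1} (λ_1 > λ_2 > … > λ_{ℓ+1}), every 1 ≤ r ≤ ℓ+1, and every function f : ℤ^{ℓ+1} → K, the following identity holds: Σ_{I ⊆ {1,…,ℓ+1}, |I| = r} ( ∏_{i ∈ I, i ≥ 2, i−1 ∉ I} (1 − q^{λ_{i−1} − λ_i}) ) · f(λ + e_I) = Σ_{J ⊆ {1,…,ℓ+1}, |J| = r} ( ∏_{j ∈ J, j ≤ ℓ, j+1 ∉ J} (1 − q^{λ_j − λ_{j+1} + 1}) ) · ( Δ(λ)/Δ(λ + e_J) ) · f(λ + e_J), where e_I := Σ_{i∈I} e_i and e_i is the i-th standard basis vector. (The left-hand side is the dual Hamiltonian Ĥ^∨_r obtained as the t→0 limit of the dual Macdonald operator, and the right-hand side is the Δ-conjugate of the q-deformed Toda Hamiltonian 𝓗_r in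 reversed, ρ-shifted variables.) -/
open Finset

theorem qfac_ne_zero {K : Type*} [Field K] (q : K)
    (hq : ∀ n : ℕ, 1 ≤ n → q ^ n ≠ 1) (n : ℤ) : qfac q n ≠ 0 := by
  unfold qfac
  refine Finset.prod_ne_zero_iff.mpr fun m _ => ?_
  exact sub_ne_zero.mpr (hq (m + 1) (by omega)).symm

theorem qfac_succ {K : Type*} [Field K] (q : K) (n : ℕ) :
    qfac q ((n : ℤ) + 1) = qfac q (n : ℤ) * (1 - q ^ ((n : ℤ) + 1)) := by
  unfold qfac
  rw [show ((n : ℤ) + 1).toNat = n + 1 by omega, Int.toNat_natCast, Finset.prod_range_succ]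
  congr 2
  exact_mod_cast rfl

/-- conjugation identity between the dual Hamiltonian `Ĥ^∨_r` (left-hand
side) and the `Δ`-conjugate of the `q`-deformed Toda Hamiltonian `𝓗_r` in reversed,
`ρ`-shifted variables (right-hand side), where `Δ(λ) = ∏_{i=1}^{ℓ}(λ_i - λ_{i+1})_q!`. -/
theorem dual_hamiltonian_conjugation {K : Type*} [Field K] (q : K)
    (hq : ∀ n : ℕ, 1 ≤ n → q ^ n ≠ 1) (ℓ : ℕ) (hℓ : 1 ≤ ℓ)
    (lam : Fin (ℓ + 1) → ℤ) (hlam : ∀ i : Fin ℓ, lam i.succ < lam i.castSucc)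
    (r : ℕ) (hr1 : 1 ≤ r) (hr2 : r ≤ ℓ + 1)
    (f : (Fin (ℓ + 1) → ℤ) → K) :
    ∑ I ∈ Finset.powersetCard r (Finset.univ : Finset (Fin (ℓ + 1))),
      (∏ i ∈ I, (if h : 0 < (i : ℕ) then
          (if (⟨(i : ℕ) - 1, lt_of_le_of_lt (Nat.sub_le _ _) i.isLt⟩ : Fin (ℓ + 1)) ∈ I then 1
           else 1 - q ^ (lam ⟨(i : ℕ) - 1, lt_of_le_of_lt (Nat.sub_le _ _) i.isLt⟩ - lam i))
         else 1)) *
        f (fun j => lam j + if j ∈ I then 1 else 0)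
    = ∑ J ∈ Finset.powersetCard r (Finset.univ : Finset (Fin (ℓ + 1))),
        (∏ j ∈ J, (if h : (j : ℕ) + 1 < ℓ + 1 then
            (if (⟨(j : ℕ) + 1, h⟩ : Fin (ℓ + 1)) ∈ J then 1
             else 1 - q ^ (lam j - lam ⟨(j : ℕ) + 1, h⟩ + 1)) else 1)) *
        ((∏ i : Fin ℓ, qfac q (lam i.castSucc - lam i.succ)) /
          (∏ i : Fin ℓ, qfac q ((lam i.castSucc + if i.castSucc ∈ J then 1 else 0) -
            (lam i.succ + if i.succ ∈ J then 1 else 0)))) *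
        f (fun j => lam j + if j ∈ J then 1 else 0) := by
  refine Finset.sum_congr rfl fun J _ => ?_
  congr 1
  rw [← Finset.prod_div_distrib]
  have hL : ∀ F : Fin (ℓ + 1) → K, ∏ i ∈ J, F i = ∏ i, if i ∈ J then F i else 1 := by
    intro F
    rw [Finset.prod_ite_mem, Finset.univ_inter]
  rw [hL, hL, Fin.prod_univ_succ, Fin.prod_univ_castSucc]
  have h0 : ¬ (0 < ((0 : Fin (ℓ + 1)) : ℕ)) := by simp
  have hl : ¬ (((Fin.last ℓ : Fin (ℓ + 1)) : ℕ) + 1 < ℓ + 1) := by simp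
  rw [dif_neg h0, dif_neg hl, ite_self, ite_self, one_mul, mul_one, ← Finset.prod_mul_distrib]
  refine Finset.prod_congr rfl fun i _ => ?_
  have hs : 0 < ((i.succ : Fin (ℓ + 1)) : ℕ) := by simp
  have hc : ((i.castSucc : Fin (ℓ + 1)) : ℕ) + 1 < ℓ + 1 := by simp
  rw [dif_pos hs, dif_pos hc]
  have e1 : (⟨((i.succ : Fin (ℓ + 1)) : ℕ) - 1, lt_of_le_of_lt (Nat.sub_le _ _) i.succ.isLt⟩ :
      Fin (ℓ + 1)) = i.castSucc := by ext; simp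
  have e2 : (⟨((i.castSucc : Fin (ℓ + 1)) : ℕ) + 1, hc⟩ : Fin (ℓ + 1)) = i.succ := by ext; simp
  rw [e1, e2]
  obtain ⟨n, hn⟩ : ∃ n : ℕ, lam i.castSucc - lam i.succ = (n : ℤ) + 1 :=
    ⟨(lam i.castSucc - lam i.succ - 1).toNat, by have := hlam i; omega⟩
  have hf := qfac_ne_zero q hq
  have hstep := qfac_succ q
  by_cases ha : i.castSucc ∈ J <;> by_cases hb : i.succ ∈ J
  · simp only [ha, hb, if_true, add_sub_add_right_eq_sub]
    rw [div_self (hf _), mul_one]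
  · simp only [ha, hb, if_true, if_false]
    rw [show lam i.castSucc + 1 - (lam i.succ + 0) = ((n + 1 : ℕ) : ℤ) + 1 by push_cast; omega, hn,
      hstep (n + 1)]
    have h1 := hf (((n + 1 : ℕ) : ℤ) + 1)
    rw [hstep] at h1
    push_cast at h1 ⊢
    rw [eq_comm, ← mul_div_assoc, mul_comm]
    exact div_self h1
  · simp only [ha, hb, if_true, if_false]
    rw [show lam i.castSucc + 0 - (lam i.succ + 1) = (n : ℤ) by omega, hn, hstep, one_mul,
      mul_div_cancel_left₀ _ (hf _)]
  · simp only [ha, hb, if_false, add_sub_add_right_eq_sub]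
    rw [div_self (hf _), mul_one]
end

section
/- The t = q^{−k}, k → ∞ degeneration of the first Macdonald operator yields the first q-deformed Toda Hamiltonian: let q ∈ ℝ with 0 < q < 1 and let x_1, …, x_{ℓ+1} be nonzero real (or complex) numbers. Fix i ∈ {1, …, ℓ+1}. Then, as k → ∞ over the natural numbers, the quantity q^{k(ℓ+1−i)} · ∏_{j ≠ i} ( q^{−k} x_i − q^{k(j−i)} x_j ) / ( x_i − q^{k(j−i)} x_j ) is defined for all sufficiently large k and converges: to 1 − x_{i−1}^{−1} x_i if i ≥ 2, and to 1 if i = 1. -/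
open Finset Filter

/-- Limit of a factor with `j > i`, `j - i = d + 1`. -/
lemma factor_gt (u v : ℝ) (hu : u ≠ 0) (d : ℕ) (a : ℕ → ℝ) (ha : ∀ k, a k ≠ 0)
    (hlim : Tendsto a atTop (nhds 0)) :
    (∀ᶠ k in atTop, u - (a k) ^ ((d : ℤ) + 1) * v ≠ 0) ∧
    Tendsto (fun k => a k * (((a k)⁻¹ * u - (a k) ^ ((d : ℤ) + 1) * v) /
      (u - (a k) ^ ((d : ℤ) + 1) * v))) atTop (nhds 1) := by
  have e : ∀ k, (a k) ^ ((d : ℤ) + 1) = (a k) ^ (d + 1) := fun k => by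
    exact_mod_cast zpow_natCast (a k) (d + 1)
  simp only [e]
  have h1 : Tendsto (fun k => u - (a k) ^ (d + 1) * v) atTop (nhds u) := by
    simpa using ((hlim.pow (d + 1)).mul_const v).const_sub u
  have h2 : Tendsto (fun k => u - (a k) ^ (d + 2) * v) atTop (nhds u) := by
    simpa using ((hlim.pow (d + 2)).mul_const v).const_sub u
  refine ⟨h1.eventually_ne hu, ?_⟩
  have h3 := h2.div h1 hu
  rw [div_self hu] at h3
  refine h3.congr fun k => ?_
  have := ha k
  simp only [Pi.div_apply]
  rw [← mul_div_assoc]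
  congr 1
  field_simp
  ring

/-- Limit of a factor with `j < i`, `i - j = d + 1`. -/
lemma factor_lt (u v : ℝ) (hv : v ≠ 0) (d : ℕ) (a : ℕ → ℝ) (ha : ∀ k, a k ≠ 0)
    (hlim : Tendsto a atTop (nhds 0)) :
    (∀ᶠ k in atTop, u - (a k) ^ (-((d : ℤ) + 1)) * v ≠ 0) ∧
    Tendsto (fun k => ((a k)⁻¹ * u - (a k) ^ (-((d : ℤ) + 1)) * v) /
      (u - (a k) ^ (-((d : ℤ) + 1)) * v)) atTop
      (nhds (if d = 0 then 1 - v⁻¹ * u else 1)) := by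
  have e : ∀ k, (a k) ^ (-((d : ℤ) + 1)) = ((a k) ^ (d + 1))⁻¹ := fun k => by
    rw [zpow_neg]; exact_mod_cast congrArg Inv.inv (zpow_natCast (a k) (d + 1))
  simp only [e]
  have h1 : Tendsto (fun k => (a k) ^ (d + 1) * u - v) atTop (nhds (-v)) := by
    simpa using ((hlim.pow (d + 1)).mul_const u).sub_const v
  have e1 : ∀ k, (a k) ^ (d + 1) * (u - ((a k) ^ (d + 1))⁻¹ * v) = (a k) ^ (d + 1) * u - v := by
    intro k
    have := ha k
    field_simp
  have e2 : ∀ k, (a k) ^ (d + 1) * ((a k)⁻¹ * u - ((a k) ^ (d + 1))⁻¹ * v)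
      = (a k) ^ d * u - v := by
    intro k
    have := ha k
    field_simp
    try ring
  have h2 : Tendsto (fun k => (a k) ^ d * u - v) atTop (nhds ((0 : ℝ) ^ d * u - v)) :=
    ((hlim.pow d).mul_const u).sub_const v
  have hv' : -v ≠ 0 := neg_ne_zero.mpr hv
  constructor
  · filter_upwards [h1.eventually_ne hv'] with k hk h0
    apply hk
    rw [← e1, h0, mul_zero]
  · have h3 := h2.div h1 hv'
    have hl : ((0 : ℝ) ^ d * u - v) / -v = if d = 0 then 1 - v⁻¹ * u else 1 := by
      split_ifs with h
      · subst h; field_simp; ring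
      · rw [zero_pow h]; field_simp; ring
    rw [hl] at h3
    refine h3.congr fun k => ?_
    simp only [Pi.div_apply]
    rw [← e1, ← e2, mul_div_mul_left _ _ (pow_ne_zero _ (ha k))]

/-- the `t = q^{-k}`, `k → ∞` degeneration of the coefficient of the shift
operator `T_{x_i}` in the conjugated first Macdonald operator: for `0 < q < 1` and
nonzero `x_1, …, x_{ℓ+1}`, the quantity
`q^{k(ℓ+1-i)} ∏_{j≠i} (q^{-k} x_i - q^{k(j-i)} x_j)/(x_i - q^{k(j-i)} x_j)`
is defined (nonvanishing denominators) for all sufficiently large `k` and converges, as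
`k → ∞`, to `1 - x_{i-1}⁻¹ x_i` if `i ≥ 2` and to `1` if `i = 1` (`1`-based indices;
here `i : Fin (ℓ+1)` is `0`-based, the paper's `i` being `(i : ℕ) + 1`). -/
theorem macdonald_to_toda_coefficient_limit (ℓ : ℕ) (q : ℝ) (hq0 : 0 < q) (hq1 : q < 1)
    (x : Fin (ℓ + 1) → ℝ) (hx : ∀ j, x j ≠ 0) (i : Fin (ℓ + 1)) :
    (∀ᶠ k : ℕ in atTop, ∀ j ∈ Finset.univ.erase i,
        x i - q ^ ((k : ℤ) * (((j : ℕ) : ℤ) - ((i : ℕ) : ℤ))) * x j ≠ 0) ∧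
    Tendsto (fun k : ℕ =>
        q ^ ((k : ℤ) * ((ℓ : ℤ) - ((i : ℕ) : ℤ))) *
          ∏ j ∈ Finset.univ.erase i,
            (q ^ (-(k : ℤ)) * x i - q ^ ((k : ℤ) * (((j : ℕ) : ℤ) - ((i : ℕ) : ℤ))) * x j) /
              (x i - q ^ ((k : ℤ) * (((j : ℕ) : ℤ) - ((i : ℕ) : ℤ))) * x j))
      atTop
      (nhds (if h : 0 < (i : ℕ) then
          1 - (x ⟨(i : ℕ) - 1, lt_of_le_of_lt (Nat.sub_le _ _) i.isLt⟩)⁻¹ * x i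
        else 1)) := by
  have ha : ∀ k : ℕ, q ^ k ≠ 0 := fun k => pow_ne_zero _ hq0.ne'
  have hlim : Tendsto (fun k : ℕ => q ^ k) atTop (nhds 0) :=
    tendsto_pow_atTop_nhds_zero_of_lt_one hq0.le hq1
  have ez : ∀ (k : ℕ) (m : ℤ), q ^ ((k : ℤ) * m) = (q ^ k) ^ m := fun k m => by
    rw [zpow_mul, zpow_natCast]
  have en : ∀ k : ℕ, q ^ (-(k : ℤ)) = (q ^ k)⁻¹ := fun k => by
    rw [zpow_neg, zpow_natCast]
  simp only [ez, en]
  have key : ∀ j ∈ Finset.univ.erase i,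
      (∀ᶠ k : ℕ in atTop, x i - (q ^ k) ^ (((j : ℕ) : ℤ) - ((i : ℕ) : ℤ)) * x j ≠ 0) ∧
      Tendsto (fun k : ℕ => (if i < j then q ^ k else 1) *
        (((q ^ k)⁻¹ * x i - (q ^ k) ^ (((j : ℕ) : ℤ) - ((i : ℕ) : ℤ)) * x j) /
          (x i - (q ^ k) ^ (((j : ℕ) : ℤ) - ((i : ℕ) : ℤ)) * x j))) atTop
        (nhds (if (j : ℕ) + 1 = i then 1 - (x j)⁻¹ * x i else 1)) := by
    intro j hj
    have hne : j ≠ i := (Finset.mem_erase.mp hj).1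
    rcases lt_or_gt_of_ne hne with h | h
    · have h' : (j : ℕ) < i := h
      obtain ⟨d, hd⟩ := Nat.exists_eq_add_of_lt h'
      have e : ((j : ℕ) : ℤ) - ((i : ℕ) : ℤ) = -((d : ℤ) + 1) := by omega
      have hc : ((j : ℕ) + 1 = i) = (d = 0) := propext (by omega)
      simp only [e, hc, if_neg (not_lt.mpr h.le), one_mul]
      exact factor_lt (x i) (x j) (hx j) d _ ha hlim
    · have h' : (i : ℕ) < j := h
      obtain ⟨d, hd⟩ := Nat.exists_eq_add_of_lt h'
      have e : ((j : ℕ) : ℤ) - ((i : ℕ) : ℤ) = (d : ℤ) + 1 := by omega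
      have hc : ¬ ((j : ℕ) + 1 = i) := by omega
      simp only [e, if_neg hc, if_pos h]
      exact factor_gt (x i) (x j) (hx i) d _ ha hlim
  refine ⟨(Filter.eventually_all_finset _).mpr fun j hj => (key j hj).1, ?_⟩
  have hp := tendsto_finsetProd (Finset.univ.erase i) fun j hj => (key j hj).2
  have hL : (∏ j ∈ Finset.univ.erase i, if (j : ℕ) + 1 = i then 1 - (x j)⁻¹ * x i else 1) =
      (if h : 0 < (i : ℕ) then
          1 - (x ⟨(i : ℕ) - 1, lt_of_le_of_lt (Nat.sub_le _ _) i.isLt⟩)⁻¹ * x i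
        else 1) := by
    split_ifs with h
    · rw [Finset.prod_eq_single (⟨(i : ℕ) - 1, lt_of_le_of_lt (Nat.sub_le _ _) i.isLt⟩ :
        Fin (ℓ + 1))]
      · rw [if_pos (by simp only; omega)]
      · intro b _ hb
        rw [if_neg]
        intro hb'
        apply hb
        ext
        simp only
        omega
      · intro hb
        exfalso
        apply hb
        simp only [Finset.mem_erase, Finset.mem_univ, and_true, ne_eq, Fin.ext_iff]
        omega
    · apply Finset.prod_eq_one
      intro j _
      rw [if_neg (by omega)]
  rw [hL] at hp
  refine hp.congr fun k => ?_
  rw [Finset.prod_mul_distrib]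
  congr 1
  rw [Finset.prod_ite, Finset.prod_const_one, mul_one, Finset.prod_const]
  have hf : (Finset.univ.erase i).filter (fun j => i < j) = Finset.Ioi i := by
    ext j
    simp only [Finset.mem_filter, Finset.mem_erase, Finset.mem_univ, and_true, Finset.mem_Ioi]
    exact ⟨fun h => h.2, fun h => ⟨h.ne', h⟩⟩
  rw [hf, Fin.card_Ioi, ← zpow_natCast]
  congr 1
  omega
end

section
/- The q-deformed gl_2-Whittaker function, defined by Ψ_{z_1,z_2}(p_1, p_2) := Σ_{p_2 ≤ p ≤ p_1} z_1^{p} z_2^{p_1+p_2−p} / ( (p_1−p)_q! (p−p_2)_q! ) for p_1 ≥ p_2 and Ψ_{z_1,z_2}(p_1, p_2) := 0 for p_1 < p_2, is a common eigenfunction of the two commuting q-deformed gl_2-Toda Hamiltonians: for all (p_1, p_2) ∈ ℤ², (1 − q^{p_1−p_2+1}) Ψ_{z_1,z_2}(p_1+1, p_2) + Ψ_{z_1,z_2}(p_1, p_2+1) = (z_1 + z_2) Ψ_{z_1,z_2}(p_1, p_2), and Ψ_{z_1,z_2}(p_1+1, p_2+1) = z_1 z_2 Ψ_{z_1,z_2}(p_1,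 p_2). -/
open Finset

/-- The `q`-deformed `gl_2`-Whittaker function
`Ψ_{z₁,z₂}(p₁,p₂) = Σ_{p₂ ≤ p ≤ p₁} z₁^p z₂^{p₁+p₂-p}/((p₁-p)_q!(p-p₂)_q!)` for
`p₁ ≥ p₂`, and `0` for `p₁ < p₂`. -/
noncomputable def whitGL2 {K : Type*} [Field K] (q z₁ z₂ : K) (p₁ p₂ : ℤ) : K :=
  if p₂ ≤ p₁ then
    ∑ p ∈ Finset.Icc p₂ p₁,
      z₁ ^ p * z₂ ^ (p₁ + p₂ - p) / (qfac q (p₁ - p) * qfac q (p - p₂))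
  else 0

/-- Reciprocal `q`-factorial, extended by zero to negative integers. -/
noncomputable def rqfac {K : Type*} [Field K] (q : K) (n : ℤ) : K :=
  if 0 ≤ n then (qfac q n)⁻¹ else 0

theorem rqfac_pred {K : Type*} [Field K] (q : K)
    (hq : ∀ n : ℕ, 1 ≤ n → q ^ n ≠ 1) (n : ℕ) :
    rqfac q ((n : ℤ) - 1) = (1 - q ^ n) * rqfac q (n : ℤ) := by
  cases n with
  | zero => simp [rqfac]
  | succ k =>
    have h : (1 - q ^ (k + 1)) ≠ 0 := sub_ne_zero.2 (hq (k + 1) (by omega)).symm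
    have e1 : (((k + 1 : ℕ) : ℤ) - 1) = (k : ℤ) := by push_cast; ring
    have h2 : qfac q ((k + 1 : ℕ) : ℤ) = qfac q (k : ℤ) * (1 - q ^ (k + 1)) := by
      unfold qfac
      rw [Int.toNat_natCast, Int.toNat_natCast, Finset.prod_range_succ]
    rw [e1]
    unfold rqfac
    rw [if_pos (by omega), if_pos (by omega), h2, mul_inv]
    field_simp

theorem whitGL2_eq {K : Type*} [Field K] (q z₁ z₂ : K) (p₁ p₂ lo hi : ℤ)
    (hlo : lo ≤ p₂) (hhi : p₁ ≤ hi) :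
    whitGL2 q z₁ z₂ p₁ p₂ = ∑ p ∈ Finset.Icc lo hi,
      z₁ ^ p * z₂ ^ (p₁ + p₂ - p) * (rqfac q (p₁ - p) * rqfac q (p - p₂)) := by
  have h1 : whitGL2 q z₁ z₂ p₁ p₂ = ∑ p ∈ Finset.Icc p₂ p₁,
      z₁ ^ p * z₂ ^ (p₁ + p₂ - p) * (rqfac q (p₁ - p) * rqfac q (p - p₂)) := by
    unfold whitGL2
    split_ifs with h
    · refine Finset.sum_congr rfl fun p hp => ?_
      rw [Finset.mem_Icc] at hp
      unfold rqfac
      rw [if_pos (by omega), if_pos (by omega), div_eq_mul_inv, mul_inv]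
    · rw [Finset.Icc_eq_empty h, Finset.sum_empty]
  rw [h1]
  refine Finset.sum_subset (Finset.Icc_subset_Icc hlo hhi) fun p _ hp => ?_
  rw [Finset.mem_Icc, not_and_or] at hp
  unfold rqfac
  rcases hp with hp | hp
  · rw [if_neg (show ¬ 0 ≤ p - p₂ by omega)]; ring
  · rw [if_neg (show ¬ 0 ≤ p₁ - p by omega)]; ring

theorem mul_whitGL2 {K : Type*} [Field K] (q z₁ z₂ : K) (hz₁ : z₁ ≠ 0)
    (p₁ p₂ lo hi : ℤ) (hlo : lo ≤ p₂ + 1) (hhi : p₁ + 1 ≤ hi) :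
    z₁ * whitGL2 q z₁ z₂ p₁ p₂ = ∑ p ∈ Finset.Icc lo hi,
      z₁ ^ p * z₂ ^ (p₁ + p₂ + 1 - p) *
        (rqfac q (p₁ + 1 - p) * rqfac q (p - p₂ - 1)) := by
  rw [whitGL2_eq q z₁ z₂ p₁ p₂ (lo - 1) (hi - 1) (by omega) (by omega), Finset.mul_sum]
  refine Finset.sum_nbij' (fun p => p + 1) (fun p => p - 1) ?_ ?_ ?_ ?_ ?_
  · intro p hp; simp only [Finset.mem_Icc] at hp ⊢; omega
  · intro p hp; simp only [Finset.mem_Icc] at hp ⊢; omega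
  · intro p _; simp
  · intro p _; simp
  · intro p _
    rw [zpow_add_one₀ hz₁, show p₁ + p₂ + 1 - (p + 1) = p₁ + p₂ - p by ring,
      show p₁ + 1 - (p + 1) = p₁ - p by ring, show p + 1 - p₂ - 1 = p - p₂ by ring]
    ring

/-- the `q`-deformed `gl_2`-Whittaker function is a common eigenfunction of
the two commuting `q`-deformed `gl_2`-Toda Hamiltonians
`𝓗₁ = (1 - q^{p₁-p₂+1}) T₁ + T₂` and `𝓗₂ = T₁ T₂`. -/
theorem gl2_toda_eigenfunction {K : Type*} [Field K] (q : K)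
    (hq : ∀ n : ℕ, 1 ≤ n → q ^ n ≠ 1) (z₁ z₂ : K) (hz₁ : z₁ ≠ 0) (hz₂ : z₂ ≠ 0)
    (p₁ p₂ : ℤ) :
    (1 - q ^ (p₁ - p₂ + 1)) * whitGL2 q z₁ z₂ (p₁ + 1) p₂ + whitGL2 q z₁ z₂ p₁ (p₂ + 1)
      = (z₁ + z₂) * whitGL2 q z₁ z₂ p₁ p₂ ∧
    whitGL2 q z₁ z₂ (p₁ + 1) (p₂ + 1) = z₁ * z₂ * whitGL2 q z₁ z₂ p₁ p₂ := by
  constructor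
  · rcases lt_or_ge p₁ p₂ with h | h
    · have e1 : whitGL2 q z₁ z₂ p₁ (p₂ + 1) = 0 := if_neg (by omega)
      have e2 : whitGL2 q z₁ z₂ p₁ p₂ = 0 := if_neg (by omega)
      rw [e1, e2]
      rcases eq_or_ne (p₁ - p₂ + 1) 0 with h0 | h0
      · rw [h0]; simp
      · have e3 : whitGL2 q z₁ z₂ (p₁ + 1) p₂ = 0 := if_neg (by omega)
        rw [e3]; simp
    · rw [add_mul, mul_whitGL2 q z₁ z₂ hz₁ p₁ p₂ p₂ (p₁ + 1) (by omega) le_rfl,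
        whitGL2_eq q z₁ z₂ (p₁ + 1) p₂ p₂ (p₁ + 1) le_rfl le_rfl,
        whitGL2_eq q z₁ z₂ p₁ (p₂ + 1) p₂ (p₁ + 1) (by omega) (by omega),
        whitGL2_eq q z₁ z₂ p₁ p₂ p₂ (p₁ + 1) le_rfl (by omega),
        Finset.mul_sum, Finset.mul_sum, ← Finset.sum_add_distrib, ← Finset.sum_add_distrib]
      refine Finset.sum_congr rfl fun p hp => ?_
      rw [Finset.mem_Icc] at hp
      obtain ⟨a, ha⟩ := Int.eq_ofNat_of_zero_le (show 0 ≤ p₁ + 1 - p by omega)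
      obtain ⟨b, hb⟩ := Int.eq_ofNat_of_zero_le (show 0 ≤ p - p₂ by omega)
      have hz : z₂ ^ (p₁ + p₂ + 1 - p) = z₂ ^ (p₁ + p₂ - p) * z₂ := by
        rw [← zpow_add_one₀ hz₂]; congr 1; ring
      have hab : q ^ (p₁ - p₂ + 1) = q ^ a * q ^ b := by
        rw [← pow_add, ← zpow_natCast]; congr 1; push_cast; omega
      rw [show p₁ + 1 + p₂ - p = p₁ + p₂ + 1 - p by ring,
        show p₁ + (p₂ + 1) - p = p₁ + p₂ + 1 - p by ring, hz, hab, ha, hb,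
        show p - (p₂ + 1) = (b : ℤ) - 1 by omega, show p₁ - p = (a : ℤ) - 1 by omega,
        rqfac_pred q hq, rqfac_pred q hq]
      ring
  · rw [mul_comm z₁ z₂, mul_assoc,
      mul_whitGL2 q z₁ z₂ hz₁ p₁ p₂ (p₂ + 1) (p₁ + 1) le_rfl le_rfl,
      whitGL2_eq q z₁ z₂ (p₁ + 1) (p₂ + 1) (p₂ + 1) (p₁ + 1) le_rfl le_rfl, Finset.mul_sum]
    refine Finset.sum_congr rfl fun p _ => ?_
    rw [show p₁ + 1 + (p₂ + 1) - p = p₁ + p₂ + 1 - p + 1 by ring, zpow_add_one₀ hz₂,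
      show p - (p₂ + 1) = p - p₂ - 1 by ring]
    ring
end
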